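/- Let B be a standard graded polynomial ring over a field K of characteristic zero, and let I ⊆ B be a graded ideal of linear type with μ(I) = ht(I) + 1 = n + 1, where grade(I) = n. Then the projective dimension of the Rees algebra R(I) over the bigraded polynomial ring S = B[y_1, ..., y_{n+1}] equals n if pd_B(B/I) = n, and equals k − 1 if pd_B(B/I) = k > n. -/

import Mathlib

open Ideal

/-- The element `f·X ∈ R(I)` for `f ∈ I`. -/
noncomputable def fX {B : Type*} [CommRing B] (I : Ideal B) (g : B) (hg : g ∈ I) :
    reesAlgebra I :=
  ⟨Polynomial.C g * Polynomial.X, by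
    rw [mem_reesAlgebra_iff]
    intro i
    rcases eq_or_ne i 1 with h | h
    · subst h; simpa using hg
    · simp [Polynomial.coeff_C_mul, Polynomial.coeff_X, h, Ne.symm h]⟩

/-- The presentation `S = B[y_0,…,y_n] → R(I)`, `y_j ↦ f_j X`. -/
noncomputable def reesStructureMap {B : Type*} [CommRing B] {n : ℕ} (I : Ideal B)
    (f : Fin (n + 1) → B) (hf : ∀ j, f j ∈ I) :
    MvPolynomial (Fin (n + 1)) B →ₐ[B] reesAlgebra I :=
  MvPolynomial.aeval (fun j => fX I (f j) (hf j))

/-- The `S`-module structure on `R(I)` induced by the presentation. -/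
noncomputable def reesModule {B : Type*} [CommRing B] {n : ℕ} (I : Ideal B)
    (f : Fin (n + 1) → B) (hf : ∀ j, f j ∈ I) :
    Module (MvPolynomial (Fin (n + 1)) B) (reesAlgebra I) :=
  Module.compHom _ (reesStructureMap I f hf).toRingHom

/-- `p ∈ S` is linear in the `y`-variables. -/
def YLinear {B : Type*} [CommRing B] {n : ℕ} (p : MvPolynomial (Fin (n + 1)) B) : Prop :=
  ∀ w : Fin (n + 1) →₀ ℕ, MvPolynomial.coeff w p ≠ 0 → (∑ j, w j) ≤ 1

/-- `I` is of linear type (with respect to the presentation `φ` coming from the chosen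
generators): the defining ideal of the Rees algebra is generated by elements that are
linear in the second set of variables. -/
def IsLinearTypePres {B : Type*} [CommRing B] {n : ℕ} {I : Ideal B}
    (φ : MvPolynomial (Fin (n + 1)) B →ₐ[B] reesAlgebra I) : Prop :=
  ∃ G : Set (MvPolynomial (Fin (n + 1)) B),
    (∀ p ∈ G, YLinear p) ∧ RingHom.ker φ.toRingHom = Ideal.span G

/-- A free resolution of `M` over `A`. -/
structure FreeRes (A : Type*) [CommRing A] (M : Type*) [AddCommGroup M] [Module A M] where
  ι : ℕ → Type
  d : ∀ i, (ι (i + 1) →₀ A) →ₗ[A] (ι i →₀ A)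
  ε : (ι 0 →₀ A) →ₗ[A] M
  exact_d : ∀ i, Function.Exact (d (i + 1)) (d i)
  exact_ε : Function.Exact (d 0) ε
  surj : Function.Surjective ε

/-- Projective dimension, as the least length of a free resolution. -/
noncomputable def projDim (A : Type*) [CommRing A] (M : Type*) [AddCommGroup M]
    [Module A M] : ℕ∞ :=
  sInf {e : ℕ∞ | ∃ k : ℕ, e = (k : ℕ∞) ∧
    ∃ R : FreeRes A M, ∀ i : ℕ, k < i → IsEmpty (R.ι i)}

/-- The height of an ideal: the infimum of the heights of primes containing it. -/
noncomputable def idealHeight {A : Type*} [CommRing A] (I : Ideal A) : ℕ∞ :=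
  ⨅ (p : PrimeSpectrum A) (_ : I ≤ p.asIdeal), Order.height p

/-- The minimal number of generators of an ideal. -/
noncomputable def minGens {A : Type*} [CommRing A] (I : Ideal A) : ℕ :=
  sInf {k : ℕ | ∃ g : Fin k → A, I = Ideal.span (Set.range g)}

/-!
Let `S = B[y_1, …, y_{n+1}]`. As `I = (f_1, …, f_{n+1})` is of linear type, `R(I) = S/J` where `J`
consists of the linear forms `∑ c_j y_j` with `∑ c_j f_j = 0`.

Upper bound `max(n, k - 1)`: let `Z_i` be the cycles of the Koszul complex of `f` over `S`. Since
`I` contains a regular sequence of length `n`, this complex is acyclic in degrees `≥ 2`, so its tail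
resolves `Z_i` for `i ≥ 2`, while `Z_1` is a second syzygy of `S/IS`. The Koszul differential of `y`
restricts to the `Z_i` and makes them into an acyclic complex resolving `S/J` (the
`𝒵`-approximation complex of Herzog, Simis and Vasconcelos): the two differentials anticommute, and
a lift of a cycle along the differential of `y` may be truncated to a single `y`-degree.

Lower bound `n`: after inverting some `f_j`, the ideal `J` contains `n` linear forms that a linear
change of variables takes to variables; they form a regular sequence annihilating `S/J ≠ 0`.

Lower bound `k - 1`: `S` is free over `B`, and `I` is a direct summand of `R(I)` over `B`.
-/

section ProjectiveDimension

open CategoryTheory TensorProduct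

universe u

/-- The projective dimension of the module `M` is less than `n`; this is the unbundled form of
`CategoryTheory.HasProjectiveDimensionLT`, so `n = 0` means `M = 0`. -/
def HasProjDimLT (R M : Type u) [CommRing R] [AddCommGroup M] [Module R M] (n : ℕ) : Prop :=
  HasProjectiveDimensionLT (ModuleCat.of R M) n

variable {R M N : Type u} [CommRing R] [AddCommGroup M] [Module R M] [AddCommGroup N] [Module R N]

lemma hasProjDimLT_zero_iff : HasProjDimLT R M 0 ↔ Subsingleton M := by
  rw [HasProjDimLT, hasProjectiveDimensionLT_zero_iff_isZero, ModuleCat.isZero_iff_subsingleton]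

lemma hasProjDimLT_one_iff : HasProjDimLT R M 1 ↔ Module.Projective R M := by
  rw [HasProjDimLT, ← projective_iff_hasProjectiveDimensionLT_one, IsProjective.iff_projective]

namespace HasProjDimLT

lemma mono {n m : ℕ} (h : HasProjDimLT R M n) (hnm : n ≤ m) : HasProjDimLT R M m :=
  have : HasProjectiveDimensionLT (ModuleCat.of R M) n := h
  hasProjectiveDimensionLT_of_ge _ n m hnm

lemma of_projective [Module.Projective R M] (n : ℕ) : HasProjDimLT R M (n + 1) :=
  (hasProjDimLT_one_iff.2 ‹_›).mono (by lia)

lemma of_surjective {n : ℕ} (g : M →ₗ[R] N) (hg : Function.Surjective g)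
    (hK : HasProjDimLT R (LinearMap.ker g) n) (hM : HasProjDimLT R M (n + 1)) :
    HasProjDimLT R N (n + 1) :=
  (LinearMap.shortExact_shortComplexKer hg).hasProjectiveDimensionLT_X₃ n hK hM

lemma ker {n : ℕ} (g : M →ₗ[R] N) (hg : Function.Surjective g) (hM : HasProjDimLT R M n)
    (hN : HasProjDimLT R N (n + 1)) : HasProjDimLT R (LinearMap.ker g) n :=
  (LinearMap.shortExact_shortComplexKer hg).hasProjectiveDimensionLT_X₁ n hM hN

lemma of_retract {n : ℕ} (i : N →ₗ[R] M) (r : M →ₗ[R] N) (hri : r ∘ₗ i = LinearMap.id)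
    (hM : HasProjDimLT R M n) : HasProjDimLT R N n :=
  have : HasProjectiveDimensionLT (ModuleCat.of R M) n := hM
  Retract.hasProjectiveDimensionLT
    { i := ModuleCat.ofHom i
      r := ModuleCat.ofHom r
      retract := by ext x; exact LinearMap.congr_fun hri x } n

lemma of_linearEquiv {n : ℕ} (e : M ≃ₗ[R] N) (hM : HasProjDimLT R M n) : HasProjDimLT R N n :=
  of_retract e.symm.toLinearMap e.toLinearMap (by ext; simp) hM

lemma ker_linearCombination_id {n : ℕ} (hM : HasProjDimLT R M (n + 2)) :
    HasProjDimLT R (LinearMap.ker (Finsupp.linearCombination R (id : M → M))) (n + 1) :=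
  ker _ (Finsupp.linearCombination_id_surjective R M) (of_projective n) hM

lemma baseChange (S : Type u) [CommRing S] [Algebra R S] [Module.Flat R S] {n : ℕ}
    (hM : HasProjDimLT R M n) : HasProjDimLT S (S ⊗[R] M) n := by
  induction n using Nat.twoStepInduction generalizing M with
  | zero =>
    rw [hasProjDimLT_zero_iff] at *
    infer_instance
  | one =>
    rw [hasProjDimLT_one_iff] at *
    infer_instance
  | more n _ ih =>
    exact of_surjective (AlgebraTensorModule.lTensor S S (Finsupp.linearCombination R (id : M → M)))
      (LinearMap.lTensor_surjective S (Finsupp.linearCombination_id_surjective R M))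
      ((ih hM.ker_linearCombination_id).of_linearEquiv (LinearMap.tensorKerEquiv S S _))
      (of_projective _)

lemma quotient_map (S : Type u) [CommRing S] [Algebra R S] [Module.Flat R S] {I : Ideal R} {n : ℕ}
    (h : HasProjDimLT R (R ⧸ I) n) : HasProjDimLT S (S ⧸ I.map (algebraMap R S)) n :=
  .of_linearEquiv (Ideal.qoutMapEquivTensorQout S).symm (h.baseChange S)

lemma restrictScalars {S : Type u} [CommRing S] [Algebra R S] [Module.Free R S]
    [Module S M] [IsScalarTower R S M] {n : ℕ} (hM : HasProjDimLT S M n) :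
    HasProjDimLT R M n := by
  induction n using Nat.twoStepInduction generalizing M with
  | zero => rwa [hasProjDimLT_zero_iff] at *
  | one =>
    rw [hasProjDimLT_one_iff] at *
    obtain ⟨s, hs⟩ := hM
    exact Module.Projective.of_split (s.restrictScalars R)
      ((Finsupp.linearCombination S (id : M → M)).restrictScalars R) (by ext x; exact hs x)
  | more n _ ih =>
    have hK := ih hM.ker_linearCombination_id
    exact of_surjective ((Finsupp.linearCombination S (id : M → M)).restrictScalars R)
      (Finsupp.linearCombination_id_surjective S M) hK (of_projective _)

end HasProjDimLT

end ProjectiveDimension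

section FreeResolutions

variable {A : Type} [CommRing A] {M P : Type} [AddCommGroup M] [Module A M]
  [AddCommGroup P] [Module A P]

/-- The Eilenberg swindle: if `P` is a retract of `F`, the countable sum of copies of `F`
absorbs `P`. -/
noncomputable def swindleEquiv {F : Type} [AddCommGroup F] [Module A F]
    (i : P →ₗ[A] F) (r : F →ₗ[A] P) (hri : ∀ x, r (i x) = x) :
    (P × (ℕ →₀ F)) ≃ₗ[A] (ℕ →₀ F) :=
  -- Split `F = ker r ⊕ P`: keep the `ker r` parts in place and move each copy of `P` one up.
  LinearEquiv.ofLinearMap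
    (LinearMap.coprod (Finsupp.lsingle 0 ∘ₗ i)
      (Finsupp.mapRange.linearMap (LinearMap.id - i ∘ₗ r) +
        Finsupp.lmapDomain F A Nat.succ ∘ₗ Finsupp.mapRange.linearMap (i ∘ₗ r)))
    (LinearMap.prod (r ∘ₗ Finsupp.lapply 0)
      (Finsupp.mapRange.linearMap (LinearMap.id - i ∘ₗ r) +
        Finsupp.mapRange.linearMap (i ∘ₗ r) ∘ₗ Finsupp.lcomapDomain Nat.succ Nat.succ_injective))
    (by
      refine LinearMap.ext fun x => ?_
      ext j
      rcases j with _ | j <;>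
        simp [Finsupp.mapDomain_of_notMem_range, hri,
          Finsupp.mapDomain_apply Nat.succ_injective, Finsupp.lcomapDomain])
    (by
      refine LinearMap.ext fun x => ?_
      obtain ⟨p, x⟩ := x
      refine Prod.ext ?_ (Finsupp.ext fun j => ?_)
      · simp [Finsupp.mapDomain_of_notMem_range, hri]
      · rcases j with _ | j <;>
        simp [Finsupp.mapDomain_of_notMem_range, hri,
          Finsupp.mapDomain_apply Nat.succ_injective, Finsupp.lcomapDomain])

lemma exists_linearEquiv_prod_finsupp_of_projective (P : Type) [AddCommGroup P] [Module A P]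
    [hP : Module.Projective A P] :
    ∃ κ : Type, Nonempty ((κ →₀ A) ≃ₗ[A] P × (κ →₀ A)) := by
  obtain ⟨s, hs⟩ := hP
  have e : (P × (ℕ →₀ (P →₀ A))) ≃ₗ[A] (ℕ →₀ (P →₀ A)) :=
    swindleEquiv s (Finsupp.linearCombination A id) hs
  let c : (ℕ × P →₀ A) ≃ₗ[A] (ℕ →₀ (P →₀ A)) := Finsupp.curryLinearEquiv A
  exact ⟨ℕ × P, ⟨c ≪≫ₗ e.symm ≪≫ₗ (LinearEquiv.refl A P).prodCongr c.symm⟩⟩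

/-- The kernel of `E ≃ F × G → F → N` is the product of `ker (F → N)` with `G`. -/
noncomputable def kerCompFstEquiv {E F G N : Type} [AddCommGroup E] [Module A E]
    [AddCommGroup F] [Module A F] [AddCommGroup G] [Module A G] [AddCommGroup N] [Module A N]
    (g : F →ₗ[A] N) (e : E ≃ₗ[A] F × G) :
    LinearMap.ker (g ∘ₗ LinearMap.fst _ _ _ ∘ₗ e.toLinearMap) ≃ₗ[A] LinearMap.ker g × G where
  toFun x := (⟨(e x.1).1, x.2⟩, (e x.1).2)
  invFun y := ⟨e.symm (y.1.1, y.2), by simp⟩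
  map_add' x y := by ext <;> simp
  map_smul' x y := by ext <;> simp
  left_inv x := by ext; simp
  right_inv y := by ext <;> simp

/-- A free resolution of `M` with its last step removed, resolving the first syzygy. -/
noncomputable def FreeRes.tail (R : FreeRes A M) : FreeRes A (LinearMap.ker R.ε) where
  ι i := R.ι (i + 1)
  d i := R.d (i + 1)
  ε := (R.d 0).codRestrict _ fun x => (R.exact_ε _).2 ⟨x, rfl⟩
  exact_d i := R.exact_d (i + 1)
  exact_ε x := by
    rw [← R.exact_d 0 x, Subtype.ext_iff]
    rfl
  surj := by
    rintro ⟨x, hx⟩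
    obtain ⟨y, rfl⟩ := (R.exact_ε x).1 hx
    exact ⟨y, rfl⟩

/-- The free resolution of length zero of a free module. -/
noncomputable def FreeRes.ofLinearEquiv {κ : Type} (e : (κ →₀ A) ≃ₗ[A] M) : FreeRes A M where
  ι i := match i with
    | 0 => κ
    | _ + 1 => Empty
  d i := 0
  ε := e.toLinearMap
  exact_d i x := by simp [Subsingleton.elim x 0]
  exact_ε x := e.map_eq_zero_iff.trans (by simp [eq_comm])
  surj := e.surjective

/-- The free resolution of `M` obtained by splicing a free cover of `M` with a free resolution
of the kernel. -/
noncomputable def FreeRes.cons {κ : Type} (ε : (κ →₀ A) →ₗ[A] M) (hε : Function.Surjective ε)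
    (R : FreeRes A (LinearMap.ker ε)) : FreeRes A M where
  ι i := match i with
    | 0 => κ
    | i + 1 => R.ι i
  d i := match i with
    | 0 => (LinearMap.ker ε).subtype ∘ₗ R.ε
    | i + 1 => R.d i
  ε := ε
  exact_d i := match i with
    | 0 => fun x => by simp [← R.exact_ε x]
    | i + 1 => R.exact_d i
  exact_ε x := by
    refine ⟨fun hx => ?_, ?_⟩
    · obtain ⟨y, hy⟩ := R.surj ⟨x, hx⟩
      exact ⟨y, by simp [hy]⟩
    · rintro ⟨y, rfl⟩
      exact (R.ε y).2
  surj := hε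

/-- `M` has a free resolution of length at most `k`. -/
def HasFreeResLE (A M : Type) [CommRing A] [AddCommGroup M] [Module A M] (k : ℕ) : Prop :=
  ∃ R : FreeRes A M, ∀ i, k < i → IsEmpty (R.ι i)

lemma HasFreeResLE.hasProjDimLT {k : ℕ} (h : HasFreeResLE A M k) : HasProjDimLT A M (k + 1) := by
  obtain ⟨R, hR⟩ := h
  induction k generalizing M with
  | zero =>
    have := hR 1 one_pos
    have hinj : Function.Injective R.ε := by
      rw [injective_iff_map_eq_zero]
      intro x hx
      obtain ⟨y, rfl⟩ := (R.exact_ε x).1 hx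
      rw [Subsingleton.elim y 0, map_zero]
    exact hasProjDimLT_one_iff.2
      (Module.Projective.of_equiv (LinearEquiv.ofBijective R.ε ⟨hinj, R.surj⟩))
  | succ k ih =>
    exact .of_surjective R.ε R.surj (ih R.tail fun i hi => hR (i + 1) (by lia)) (.of_projective _)

lemma HasProjDimLT.hasFreeResLE_one (h : HasProjDimLT A M 2) : HasFreeResLE A M 1 := by
  have hP := h.ker_linearCombination_id
  set g := Finsupp.linearCombination A (id : M → M)
  have hg : Function.Surjective g := Finsupp.linearCombination_id_surjective A M
  rw [zero_add, hasProjDimLT_one_iff] at hP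
  obtain ⟨κ, ⟨e⟩⟩ := exists_linearEquiv_prod_finsupp_of_projective (A := A) (LinearMap.ker g)
  let c : (M ⊕ κ →₀ A) ≃ₗ[A] (M →₀ A) × (κ →₀ A) := Finsupp.sumFinsuppLEquivProdFinsupp A
  refine ⟨.cons (g ∘ₗ LinearMap.fst _ _ _ ∘ₗ c.toLinearMap)
    (hg.comp (Prod.fst_surjective.comp c.surjective))
    (.ofLinearEquiv (e ≪≫ₗ (kerCompFstEquiv g c).symm)), fun i hi => ?_⟩
  match i, hi with
  | _ + 2, _ => exact inferInstanceAs (IsEmpty Empty)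

lemma HasProjDimLT.hasFreeResLE {k : ℕ} (h : HasProjDimLT A M (k + 2)) :
    HasFreeResLE A M (k + 1) := by
  induction k generalizing M with
  | zero => exact h.hasFreeResLE_one
  | succ k ih =>
    obtain ⟨R, hR⟩ := ih h.ker_linearCombination_id
    refine ⟨.cons _ (Finsupp.linearCombination_id_surjective A M) R, fun i hi => ?_⟩
    obtain ⟨i, rfl⟩ := Nat.exists_eq_add_of_lt hi
    exact hR _ (by lia)

lemma projDim_le_iff_hasFreeResLE {k : ℕ} : projDim A M ≤ k ↔ HasFreeResLE A M k := by
  refine ⟨fun h => ?_, fun h => sInf_le ⟨k, rfl, h⟩⟩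
  obtain ⟨_, ⟨j, rfl, R, hR⟩, hj⟩ :=
    sInf_lt_iff.1 (h.trans_lt (ENat.natCast_lt_natCast.2 (Nat.lt_succ_self k)))
  exact ⟨R, fun i hi => hR i (by have := ENat.natCast_lt_natCast.1 hj; lia)⟩

-- For `k = 0` the two sides differ: a projective module need not be free.
lemma projDim_le_iff_hasProjDimLT {k : ℕ} (hk : k ≠ 0) :
    projDim A M ≤ k ↔ HasProjDimLT A M (k + 1) := by
  obtain ⟨k, rfl⟩ := Nat.exists_eq_succ_of_ne_zero hk
  exact projDim_le_iff_hasFreeResLE.trans ⟨HasFreeResLE.hasProjDimLT, HasProjDimLT.hasFreeResLE⟩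

lemma projDim_eq_of_hasProjDimLT {k : ℕ} (hk : k ≠ 0) (h : HasProjDimLT A M (k + 1))
    (h' : ¬ HasProjDimLT A M k) : projDim A M = k := by
  refine le_antisymm ((projDim_le_iff_hasProjDimLT hk).2 h) ?_
  by_contra! hlt
  obtain ⟨j, hj⟩ := ENat.ne_top_iff_exists.1 hlt.ne_top
  rw [← hj] at hlt
  exact h' ((projDim_le_iff_hasFreeResLE.1 hj.symm.le).hasProjDimLT.mono
    (ENat.natCast_lt_natCast.1 hlt))

lemma not_hasProjDimLT_of_lt_projDim {k : ℕ} (hk : k ≠ 0) (h : (k : ℕ∞) < projDim A M) :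
    ¬ HasProjDimLT A M (k + 1) :=
  fun hlt => h.not_ge ((projDim_le_iff_hasProjDimLT hk).2 hlt)

end FreeResolutions

section Koszul

/-- The standard basis of degree `i` of the Koszul complex on `n` elements, i.e. the `i`-element
subsets of `Fin n`: a subset of `Fin (n + 1)` omits or contains the last element. Degrees are
integers so that this recursion, which exhibits the complex as an iterated mapping cone, needs no
case distinction on `i`. -/
def KoszulIndex : ℕ → ℤ → Type
  | 0, i => PLift (i = 0)
  | n + 1, i => KoszulIndex n i ⊕ KoszulIndex n (i - 1)

namespace KoszulIndex

variable {n : ℕ} {i : ℤ}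

/-- The subsets omitting the last element. -/
def inl : KoszulIndex n i → KoszulIndex (n + 1) i := Sum.inl

/-- The subsets containing the last element. -/
def inr : KoszulIndex n (i - 1) → KoszulIndex (n + 1) i := Sum.inr

lemma funext_inl_inr {M : Type*} {v w : KoszulIndex (n + 1) i → M} (hl : v ∘ inl = w ∘ inl)
    (hr : v ∘ inr = w ∘ inr) : v = w :=
  funext fun s => Sum.casesOn s (congrFun hl) (congrFun hr)

instance finite : ∀ (n : ℕ) (i : ℤ), Finite (KoszulIndex n i)
  | 0, i => inferInstanceAs (Finite (PLift (i = 0)))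
  | n + 1, i =>
    have := finite n i
    have := finite n (i - 1)
    inferInstanceAs (Finite (KoszulIndex n i ⊕ KoszulIndex n (i - 1)))

lemma isEmpty_of_neg : ∀ {n : ℕ} {i : ℤ}, i < 0 → IsEmpty (KoszulIndex n i)
  | 0, _, h => ⟨fun s => h.ne s.down⟩
  | n + 1, i, h =>
    have := isEmpty_of_neg (n := n) h
    have := isEmpty_of_neg (n := n) (i := i - 1) (by lia)
    inferInstanceAs (IsEmpty (KoszulIndex n i ⊕ KoszulIndex n (i - 1)))

lemma isEmpty_of_lt : ∀ {n : ℕ} {i : ℤ}, (n : ℤ) < i → IsEmpty (KoszulIndex n i)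
  | 0, _, h => ⟨fun s => h.ne' s.down⟩
  | n + 1, i, h =>
    have := isEmpty_of_lt (n := n) (i := i) (by lia)
    have := isEmpty_of_lt (n := n) (i := i - 1) (by lia)
    inferInstanceAs (IsEmpty (KoszulIndex n i ⊕ KoszulIndex n (i - 1)))

instance uniqueZero : ∀ n : ℕ, Unique (KoszulIndex n 0)
  | 0 => ⟨⟨⟨rfl⟩⟩, fun _ => rfl⟩
  | n + 1 =>
    have := isEmpty_of_neg (n := n) (i := 0 - 1) (by lia)
    have := uniqueZero n
    (Equiv.sumEmpty (KoszulIndex n 0) (KoszulIndex n (0 - 1))).unique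

lemma nonempty_top : ∀ n : ℕ, Nonempty (KoszulIndex n n)
  | 0 => ⟨⟨rfl⟩⟩
  | n + 1 => by
    obtain ⟨s⟩ := nonempty_top n
    rw [show (n : ℤ) = (n + 1 : ℕ) - 1 by simp] at s
    exact ⟨inr s⟩

/-- The singletons of `Fin n` as the indices of degree one. -/
def singleEquiv : ∀ n : ℕ, Fin n ≃ KoszulIndex n 1
  | 0 => ⟨Fin.elim0, fun s => absurd s.down one_ne_zero, fun j => j.elim0,
      fun s => absurd s.down one_ne_zero⟩
  | n + 1 => finSuccEquivLast.trans ((Equiv.optionEquivSumPUnit (Fin n)).trans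
      ((singleEquiv n).sumCongr (Equiv.ofUnique PUnit.{1} (KoszulIndex n 0))))

lemma singleEquiv_castSucc (j : Fin n) :
    singleEquiv (n + 1) j.castSucc = inl (singleEquiv n j) :=
  (Equiv.trans_apply ..).trans (by rw [finSuccEquivLast_castSucc]; rfl)

lemma singleEquiv_last :
    singleEquiv (n + 1) (Fin.last n) = inr (i := 1) (default : KoszulIndex n 0) :=
  (Equiv.trans_apply ..).trans (by rw [finSuccEquivLast_last]; rfl)

end KoszulIndex

open KoszulIndex

variable {R M : Type*} [CommRing R] [AddCommGroup M] [Module R M]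

/-- The differential of the Koszul complex of the family `f` with coefficients in `M`. -/
def koszulD : ∀ {n : ℕ} (_ : Fin n → R) (i : ℤ),
    (KoszulIndex n i → M) →ₗ[R] (KoszulIndex n (i - 1) → M)
  | 0, _, _ => 0
  | n + 1, f, i =>
    (LinearEquiv.sumArrowLequivProdArrow _ _ R M).symm.toLinearMap ∘ₗ LinearMap.prod
      (koszulD (f ∘ Fin.castSucc) i ∘ₗ LinearMap.funLeft R M inl +
        f (Fin.last n) • LinearMap.funLeft R M inr)
      (-(koszulD (f ∘ Fin.castSucc) (i - 1) ∘ₗ LinearMap.funLeft R M inr))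

/-- The operator of degree one on the Koszul complex given by the linear form `∑ j, c j • e_j`. -/
def koszulWedge : ∀ {n : ℕ} (_ : Fin n → R) (i : ℤ),
    (KoszulIndex n (i - 1) → M) →ₗ[R] (KoszulIndex n i → M)
  | 0, _, _ => 0
  | n + 1, c, i =>
    (LinearEquiv.sumArrowLequivProdArrow _ _ R M).symm.toLinearMap ∘ₗ LinearMap.prod
      (koszulWedge (c ∘ Fin.castSucc) i ∘ₗ LinearMap.funLeft R M inl)
      (c (Fin.last n) • LinearMap.funLeft R M inl -
        koszulWedge (c ∘ Fin.castSucc) (i - 1) ∘ₗ LinearMap.funLeft R M inr)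

section Differential

variable {n : ℕ}

@[simp]
lemma koszulD_comp_inl (f : Fin (n + 1) → R) (i : ℤ) (w : KoszulIndex (n + 1) i → M) :
    koszulD f i w ∘ inl =
      koszulD (f ∘ Fin.castSucc) i (w ∘ inl) + f (Fin.last n) • (w ∘ inr) := rfl

@[simp]
lemma koszulD_comp_inr (f : Fin (n + 1) → R) (i : ℤ) (w : KoszulIndex (n + 1) i → M) :
    koszulD f i w ∘ inr = -koszulD (f ∘ Fin.castSucc) (i - 1) (w ∘ inr) := rfl

@[simp]
lemma koszulWedge_comp_inl (c : Fin (n + 1) → R) (i : ℤ) (w : KoszulIndex (n + 1) (i - 1) → M) :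
    koszulWedge c i w ∘ inl = koszulWedge (c ∘ Fin.castSucc) i (w ∘ inl) := rfl

@[simp]
lemma koszulWedge_comp_inr (c : Fin (n + 1) → R) (i : ℤ) (w : KoszulIndex (n + 1) (i - 1) → M) :
    koszulWedge c i w ∘ inr =
      c (Fin.last n) • (w ∘ inl) - koszulWedge (c ∘ Fin.castSucc) (i - 1) (w ∘ inr) := rfl

lemma koszulD_koszulD_anticomm (f g : Fin n → R) (i : ℤ) (w : KoszulIndex n i → M) :
    koszulD f (i - 1) (koszulD g i w) = -koszulD g (i - 1) (koszulD f i w) := by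
  induction n generalizing i with
  | zero => simp [koszulD]
  | succ n ih =>
    have ih := ih (f ∘ Fin.castSucc) (g ∘ Fin.castSucc)
    refine funext_inl_inr ?_ ?_
    · simp only [Pi.neg_comp, koszulD_comp_inl, koszulD_comp_inr, map_add, map_smul, smul_neg, ih i]
      abel
    · simp only [Pi.neg_comp, koszulD_comp_inr, map_neg, ih (i - 1)]

lemma koszulD_koszulD (f : Fin n → R) (i : ℤ) (w : KoszulIndex n i → M) :
    koszulD f (i - 1) (koszulD f i w) = 0 := by
  induction n generalizing i with
  | zero => rfl
  | succ n ih => exact funext_inl_inr (by simp [ih, Pi.zero_comp]) (by simp [ih, Pi.zero_comp])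

lemma koszulD_koszulWedge_add (f c : Fin n → R) (i : ℤ) (w : KoszulIndex n (i - 1) → M) :
    koszulD f i (koszulWedge c i w) + koszulWedge c (i - 1) (koszulD f (i - 1) w) =
      (∑ j, c j * f j) • w := by
  induction n generalizing i with
  | zero => simp [koszulD, koszulWedge]
  | succ n ih =>
    have ihl := ih (f ∘ Fin.castSucc) (c ∘ Fin.castSucc) i (w ∘ inl)
    have ihr := ih (f ∘ Fin.castSucc) (c ∘ Fin.castSucc) (i - 1) (w ∘ inr)
    simp only [Function.comp_apply] at ihl ihr
    refine funext_inl_inr ?_ ?_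
    · simp only [Pi.add_comp, Pi.smul_comp, koszulD_comp_inl, koszulWedge_comp_inl,
        koszulWedge_comp_inr, map_add, map_smul, smul_sub, Fin.sum_univ_castSucc, add_smul, ← ihl,
        mul_smul, smul_comm (c _) (f _)]
      abel
    · simp only [Pi.add_comp, Pi.smul_comp, koszulD_comp_inl, koszulD_comp_inr,
        koszulWedge_comp_inr, map_neg, map_sub, map_smul, smul_add, Fin.sum_univ_castSucc,
        add_smul, ← ihr, mul_smul]
      abel

lemma exists_koszulD_eq_smul (f : Fin n → R) {a : R} (ha : a ∈ Ideal.span (Set.range f)) {i : ℤ}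
    {z : KoszulIndex n (i - 1) → M} (hz : koszulD f (i - 1) z = 0) :
    ∃ v, koszulD f i v = a • z := by
  obtain ⟨c, rfl⟩ := Ideal.mem_span_range_iff_exists_fun.1 ha
  exact ⟨koszulWedge c i z, by simp [← koszulD_koszulWedge_add, hz]⟩

lemma koszulD_comp_addMonoidHom {R' M' : Type*} [CommRing R'] [AddCommGroup M'] [Module R' M']
    {f : Fin n → R} {f' : Fin n → R'} {g g' : M →+ M'}
    (h : ∀ j m, f' j • g m = g' (f j • m)) (i : ℤ) (w : KoszulIndex n i → M) :
    koszulD f' i (g ∘ w) = g' ∘ koszulD f i w := by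
  induction n generalizing i with
  | zero => ext; simp [koszulD]
  | succ n ih =>
    have ih := ih (f := f ∘ Fin.castSucc) (f' := f' ∘ Fin.castSucc) fun j => h j.castSucc
    refine funext_inl_inr (funext fun s => ?_) (funext fun s => ?_)
    · change koszulD _ i (g ∘ w ∘ inl) s + f' (Fin.last n) • g (w (inr s)) =
        g' (koszulD _ i (w ∘ inl) s + f (Fin.last n) • w (inr s))
      rw [ih, h, map_add, Function.comp_apply]
    · change -koszulD _ (i - 1) (g ∘ w ∘ inr) s = g' (-koszulD _ (i - 1) (w ∘ inr) s)
      rw [ih, map_neg, Function.comp_apply]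

lemma koszulD_one_apply (f : Fin n → R) (w : KoszulIndex n 1 → M) (s : KoszulIndex n (1 - 1)) :
    koszulD f 1 w s = ∑ j, f j • w (singleEquiv n j) := by
  induction n with
  | zero => simp [koszulD]
  | succ n ih =>
    obtain rfl : s = inl (default : KoszulIndex n 0) :=
      Subsingleton.elim (α := KoszulIndex (n + 1) 0) _ _
    have := congrFun (koszulD_comp_inl f 1 w) (default : KoszulIndex n 0)
    simp only [Function.comp_apply] at this
    rw [this, Fin.sum_univ_castSucc, singleEquiv_last]
    simp only [singleEquiv_castSucc]
    rw [Pi.add_apply, ih]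
    rfl

lemma koszulD_comp_linearMap {N : Type*} [AddCommGroup N] [Module R N] (f : Fin n → R)
    (g : M →ₗ[R] N) (i : ℤ) (w : KoszulIndex n i → M) :
    koszulD f i (g ∘ w) = g ∘ koszulD f i w :=
  koszulD_comp_addMonoidHom (g := g.toAddMonoidHom) (g' := g.toAddMonoidHom)
    (fun _ _ => (map_smul g _ _).symm) i w

lemma koszulD_eq_zero_of_smul_eq_zero {f : Fin n → R} (hf : ∀ j, ∀ m : M, f j • m = 0) (i : ℤ)
    (w : KoszulIndex n i → M) : koszulD f i w = 0 :=
  koszulD_comp_addMonoidHom (f := f) (f' := f) (g := AddMonoidHom.id M) (g' := 0)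
    (by simpa using hf) i w

end Differential

section Exactness

variable {n : ℕ} {f : Fin n → R} {i : ℤ}

lemma koszul_exact_iff :
    Function.Exact (koszulD (M := M) f i) (koszulD f (i - 1)) ↔
      ∀ z : KoszulIndex n (i - 1) → M, koszulD f (i - 1) z = 0 → ∃ v, koszulD f i v = z :=
  ⟨fun h z => (h z).1, fun h z => ⟨h z, fun ⟨v, hv⟩ => hv ▸ koszulD_koszulD f i v⟩⟩

lemma koszul_exact_of_surjective {N : Type*} [AddCommGroup N] [Module R N] (g : M →ₗ[R] N)
    (hg : Function.Surjective g) (hM : Function.Exact (koszulD (M := M) f i) (koszulD f (i - 1)))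
    (hK : Function.Exact (koszulD (M := LinearMap.ker g) f (i - 1)) (koszulD f (i - 1 - 1))) :
    Function.Exact (koszulD (M := N) f i) (koszulD f (i - 1)) := by
  rw [koszul_exact_iff] at hM hK ⊢
  intro z hz
  obtain ⟨z, rfl⟩ := hg.comp_left z
  rw [koszulD_comp_linearMap] at hz
  let c : KoszulIndex n (i - 1 - 1) → LinearMap.ker g :=
    fun s => ⟨koszulD f (i - 1) z s, congrFun hz s⟩
  have hc : (LinearMap.ker g).subtype ∘ c = koszulD f (i - 1) z := rfl
  obtain ⟨u, hu⟩ := hK c ((Submodule.injective_subtype _).comp_left (by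
    change (LinearMap.ker g).subtype ∘ koszulD f _ c = 0
    rw [← koszulD_comp_linearMap, hc, koszulD_koszulD]))
  obtain ⟨v, hv⟩ := hM (z - (LinearMap.ker g).subtype ∘ u) (by
    rw [map_sub, koszulD_comp_linearMap, hu, hc, sub_self])
  refine ⟨g ∘ v, ?_⟩
  rw [koszulD_comp_linearMap, hv]
  ext s
  simp

/-- Multiplication by `a` is zero on Koszul homology, while its cokernel embeds in the vanishing
homology of `M / aM`. -/
lemma koszul_exact_of_quotSMulTop {a : R} (ha : a ∈ Ideal.span (Set.range f))
    (hreg : IsSMulRegular M a)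
    (hq : Function.Exact (koszulD (M := QuotSMulTop a M) f i) (koszulD f (i - 1))) :
    Function.Exact (koszulD (M := M) f (i - 1)) (koszulD f (i - 1 - 1)) := by
  rw [koszul_exact_iff] at hq ⊢
  intro z hz
  obtain ⟨w, hw⟩ := exists_koszulD_eq_smul f ha hz
  let q : M →ₗ[R] QuotSMulTop a M := Submodule.mkQ _
  have hq_zero (x : M) : q x = 0 ↔ ∃ u, a • u = x := by
    simp [q, Submodule.mem_smul_pointwise_iff_exists]
  obtain ⟨v, hv⟩ := hq (q ∘ w) (by
    rw [koszulD_comp_linearMap, hw]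
    exact funext fun s => (hq_zero _).2 ⟨_, rfl⟩)
  obtain ⟨v, rfl⟩ := (Submodule.mkQ_surjective _).comp_left v
  rw [koszulD_comp_linearMap] at hv
  choose u hu using fun s => (hq_zero (w s - koszulD f i v s)).1
    (by rw [map_sub, sub_eq_zero]; exact (congrFun hv s).symm)
  have hw' : w = koszulD f i v + a • u := funext fun s => by simp [hu]
  rw [hw', map_add, koszulD_koszulD, zero_add, map_smul] at hw
  exact ⟨u, funext fun s => hreg (congrFun hw s)⟩

open RingTheory.Sequence in
lemma koszul_exact_of_isWeaklyRegular {rs : List R} (hrs : ∀ a ∈ rs, a ∈ Ideal.span (Set.range f))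
    (hreg : IsWeaklyRegular M rs) (hi : (n : ℤ) - rs.length < i - 1) :
    Function.Exact (koszulD (M := M) f i) (koszulD f (i - 1)) := by
  induction rs generalizing M i with
  | nil =>
    have := isEmpty_of_lt (n := n) (i := i - 1) (by simpa using hi)
    exact koszul_exact_iff.2 fun z _ => ⟨0, Subsingleton.elim _ _⟩
  | cons a rs ih =>
    rw [isWeaklyRegular_cons_iff] at hreg
    obtain ⟨i, rfl⟩ : ∃ k, i = k - 1 := ⟨i + 1, by ring⟩
    rw [List.length_cons] at hi
    exact koszul_exact_of_quotSMulTop (hrs a List.mem_cons_self) hreg.1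
      (ih (fun b hb => hrs b (List.mem_cons_of_mem a hb)) hreg.2 (by lia))

end Exactness

section AcyclicityOfProjDim

universe u

variable {R M : Type u} [CommRing R] [AddCommGroup M] [Module R M] {rs : List R}

open RingTheory.Sequence

lemma koszul_exact_of_hasProjDimLT (hreg : IsWeaklyRegular R rs) {n : ℕ} {f : Fin n → R}
    (hrs : ∀ a ∈ rs, a ∈ Ideal.span (Set.range f)) {r : ℕ} (hM : HasProjDimLT R M r) {i : ℤ}
    (hi : (n : ℤ) - rs.length + r < i) :
    Function.Exact (koszulD (M := M) f i) (koszulD f (i - 1)) := by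
  have of_projective (F : Type u) [AddCommGroup F] [Module R F] [Module.Projective R F] {i : ℤ}
      (hi : (n : ℤ) - rs.length + 1 < i) :
      Function.Exact (koszulD (M := F) f i) (koszulD f (i - 1)) :=
    koszul_exact_of_isWeaklyRegular hrs
      (((TensorProduct.rid R F).isWeaklyRegular_congr rs).1 (hreg.isWeaklyRegular_lTensor))
      (by lia)
  induction r using Nat.twoStepInduction generalizing M i with
  | zero =>
    rw [hasProjDimLT_zero_iff] at hM
    exact koszul_exact_iff.2 fun z _ => ⟨0, Subsingleton.elim _ _⟩
  | one =>
    rw [hasProjDimLT_one_iff] at hM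
    exact of_projective M hi
  | more r _ ih =>
    exact koszul_exact_of_surjective _ (Finsupp.linearCombination_id_surjective R M)
      (of_projective _ (by lia)) (ih hM.ker_linearCombination_id (by lia))

lemma not_hasProjDimLT_length_of_smul_eq_zero [Nontrivial M] (hreg : IsWeaklyRegular R rs)
    (h : ∀ a ∈ rs, ∀ m : M, a • m = 0) : ¬ HasProjDimLT R M rs.length := by
  intro hM
  have hexact := koszul_exact_of_hasProjDimLT hreg (f := rs.get)
    (fun a ha => Ideal.subset_span (List.mem_iff_get.1 ha)) hM (i := rs.length + 1) (by lia)
  obtain ⟨m, hm⟩ := exists_ne (0 : M)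
  obtain ⟨v, hv⟩ := koszul_exact_iff.1 hexact (fun _ => m)
    (koszulD_eq_zero_of_smul_eq_zero (fun j => h _ (rs.get_mem j)) _ _)
  obtain ⟨s⟩ : Nonempty (KoszulIndex rs.length (rs.length + 1 - 1)) := by
    rw [add_sub_cancel_right]
    exact nonempty_top rs.length
  rw [koszulD_eq_zero_of_smul_eq_zero fun j => h _ (rs.get_mem j)] at hv
  exact hm (congrFun hv s).symm

end AcyclicityOfProjDim

end Koszul

section Height

open Polynomial

lemma height_le_height_comap_of_isIntegral {A T : Type*} [CommRing A] [CommRing T] [Algebra A T]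
    [Algebra.IsIntegral A T] (Q : Ideal T) [Q.IsPrime] :
    Q.height ≤ (Q.comap (algebraMap A T)).height := by
  have hmono : StrictMono (PrimeSpectrum.comap (algebraMap A T)) :=
    fun _ _ h => IsIntegral.comap_lt_comap h
  have := Order.height_le_height_apply_of_strictMono _ hmono ⟨Q, ‹_›⟩
  rwa [← PrimeSpectrum.height_eq_orderHeight, ← PrimeSpectrum.height_eq_orderHeight] at this

lemma height_le_height_comap_C_add_one {A : Type*} [CommRing A] [IsNoetherianRing A]
    {I : Ideal A[X]} {g : A[X]} (hg : g.Monic) (hgI : g ∈ I) :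
    I.height ≤ (I.comap (C : A →+* A[X])).height + 1 := by
  let T := A[X] ⧸ Ideal.span {g}
  let π : A[X] →+* T := Ideal.Quotient.mk _
  have : Module.Finite A T := hg.finite_quotient
  obtain hJ | hJ := eq_or_ne (I.comap (C : A →+* A[X])).height ⊤
  · simp [hJ]
  obtain ⟨k, hk⟩ := ENat.ne_top_iff_exists.1 hJ
  obtain ⟨q, hq, hIq, hqk⟩ := Ideal.exists_isPrime_height_eq hk.symm
  have hcomap : (I.map π).comap (algebraMap A T) ≤ q := by
    have : (I.map π).comap π = I := Ideal.comap_map_mk ((Ideal.span_singleton_le_iff_mem I).2 hgI)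
    rwa [show algebraMap A T = π.comp C from rfl, ← Ideal.comap_comap, this]
  obtain ⟨Q, hIQ, hQ, rfl⟩ := Ideal.exists_ideal_over_prime_of_isIntegral q _ hcomap
  have hgQ : g ∈ Q.comap π := by
    rw [Ideal.mem_comap, show π g = 0 from Ideal.Quotient.mk_singleton_self g]
    exact Q.zero_mem
  calc I.height ≤ (Q.comap π).height := Ideal.height_mono (Ideal.map_le_iff_le_comap.1 hIQ)
    _ ≤ Q.height + 1 := by
        have h := Ideal.height_le_height_add_one_of_mem hgQ
        rwa [Ideal.map_comap_of_surjective _ Ideal.Quotient.mk_surjective] at h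
    _ ≤ _ := by
        rw [← hk, ← hqk]
        gcongr
        exact height_le_height_comap_of_isIntegral Q

lemma idealHeight_eq_height {A : Type*} [CommRing A] (I : Ideal A) : idealHeight I = I.height := by
  refine le_antisymm ?_ (le_iInf₂ fun p hp => ?_)
  · rw [Ideal.height_eq_inf_minimalPrimes]
    refine le_iInf₂ fun J hJ => ?_
    have := hJ.1.1
    exact (iInf₂_le (⟨J, this⟩ : PrimeSpectrum A) hJ.1.2).trans_eq
      (PrimeSpectrum.height_eq_orderHeight _).symm
  · exact (Ideal.height_mono hp).trans_eq (PrimeSpectrum.height_eq_orderHeight p)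

end Height

section Shear

open MvPolynomial

variable {σ R : Type*} [CommRing R]

/-- The shear automorphism of a polynomial ring adding to every variable `X j` the polynomial
`q j` in the fixed variable `X i`. -/
noncomputable def shear (i : σ) (q : σ → Polynomial R) (hq : q i = 0) :
    MvPolynomial σ R ≃ₐ[R] MvPolynomial σ R :=
  have inverse (q : σ → Polynomial R) (hq : q i = 0) :
      (aeval fun j => X j + Polynomial.aeval (X i) (q j)).comp
        (aeval fun j => X j + Polynomial.aeval (X i) ((-q) j)) = AlgHom.id R (MvPolynomial σ R) :=
    algHom_ext fun j => by simp [← Polynomial.aeval_algHom_apply, hq]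
  AlgEquiv.ofAlgHom (aeval fun j => X j + Polynomial.aeval (X i) (q j))
    (aeval fun j => X j + Polynomial.aeval (X i) ((-q) j)) (inverse q hq)
    (by simpa using inverse (-q) (by simp [hq]))

lemma shear_X (i : σ) (q : σ → Polynomial R) (hq : q i = 0) (j : σ) :
    shear i q hq (X j) = X j + Polynomial.aeval (X i) (q j) := by
  simp [shear]

end Shear

section MonicPosition

open Polynomial

lemma isUnit_leadingCoeff_sum {ι A : Type*} [CommRing A] {s : Finset ι} (hs : s.Nonempty)
    {c : ι → A} (hc : ∀ v ∈ s, IsUnit (c v)) {p : ι → A[X]} (hp : ∀ v ∈ s, (p v).Monic)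
    (hinj : Set.InjOn (fun v => (p v).natDegree) s) :
    IsUnit (∑ v ∈ s, C (c v) * p v).leadingCoeff := by
  nontriviality A
  obtain ⟨u, hu, hmax⟩ := s.exists_max_image (fun v => (p v).natDegree) hs
  have hcoeff : (∑ v ∈ s, C (c v) * p v).coeff (p u).natDegree = c u := by
    rw [finsetSum_coeff, Finset.sum_eq_single_of_mem u hu, coeff_C_mul, (hp u hu).coeff_natDegree,
      mul_one]
    intro v hv hvu
    rw [coeff_C_mul, coeff_eq_zero_of_natDegree_lt
      ((hmax v hv).lt_of_ne fun h => hvu (hinj hv hu h)), mul_zero]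
  have hdeg : (∑ v ∈ s, C (c v) * p v).natDegree = (p u).natDegree :=
    natDegree_eq_of_le_of_coeff_ne_zero
      (natDegree_sum_le_of_forall_le _ _ fun v hv => (natDegree_C_mul_le _ _).trans (hmax v hv))
      (hcoeff ▸ (hc u hu).ne_zero)
  rw [Polynomial.leadingCoeff, hdeg, hcoeff]
  exact hc u hu

lemma sum_mul_pow_injOn (m N : ℕ) :
    Set.InjOn (fun v : Fin m →₀ ℕ => ∑ j, v j * N ^ (j : ℕ)) {v | ∀ j, v j < N} := by
  intro v hv w hw h
  have hvw : finFunctionFinEquiv (fun j => (⟨v j, hv j⟩ : Fin N)) =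
      finFunctionFinEquiv fun j => ⟨w j, hw j⟩ := by
    rw [Fin.ext_iff]
    simpa only [finFunctionFinEquiv_apply] using h
  ext j
  exact Fin.ext_iff.1 (congrFun (finFunctionFinEquiv.injective hvw) j)

/-- Nagata's change of variables: after `X j ↦ X j + X 0 ^ N ^ j` the monomials occurring in `g`
become monic in `X 0` of pairwise distinct degrees. -/
lemma exists_algEquiv_isUnit_leadingCoeff {K : Type*} [Field K] {m : ℕ}
    {g : MvPolynomial (Fin (m + 1)) K} (hg : g ≠ 0) :
    ∃ e : MvPolynomial (Fin (m + 1)) K ≃ₐ[K] (MvPolynomial (Fin m) K)[X],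
      IsUnit (e g).leadingCoeff := by
  let N := g.totalDegree + 1
  let q : Fin (m + 1) → K[X] := Fin.cons 0 fun j => X ^ N ^ (j.succ : ℕ)
  let e := (shear 0 q rfl).trans (MvPolynomial.finSuccEquiv K m)
  have he_X (j : Fin (m + 1)) :
      (e (MvPolynomial.X j)).Monic ∧ (e (MvPolynomial.X j)).natDegree = N ^ (j : ℕ) := by
    refine Fin.cases ?_ (fun j => ?_) j
    · simp [e, q, shear_X, MvPolynomial.finSuccEquiv_X_zero, monic_X]
    · have h : e (MvPolynomial.X j.succ) = X ^ N ^ (j.succ : ℕ) + C (MvPolynomial.X j) := by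
        simp [e, q, shear_X, MvPolynomial.finSuccEquiv_X_zero,
          MvPolynomial.finSuccEquiv_X_succ, add_comm]
      rw [h]
      exact ⟨monic_X_pow_add_C _ (by simp [N]), natDegree_X_pow_add_C⟩
  have he_monic (v : Fin (m + 1) →₀ ℕ) : (∏ j, e (MvPolynomial.X j) ^ v j).Monic :=
    monic_prod_of_monic _ _ fun j _ => (he_X j).1.pow _
  have he_natDegree (v : Fin (m + 1) →₀ ℕ) :
      (∏ j, e (MvPolynomial.X j) ^ v j).natDegree = ∑ j, v j * N ^ (j : ℕ) := by
    rw [natDegree_prod_of_monic _ _ fun j _ => (he_X j).1.pow _]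
    simp only [(he_X _).1.natDegree_pow, (he_X _).2]
  have he_sum : e g =
      ∑ v ∈ g.support, C (MvPolynomial.C (g.coeff v)) * ∏ j, e (MvPolynomial.X j) ^ v j := by
    conv_lhs => rw [g.as_sum]
    have he_C (c : K) : e (MvPolynomial.C c) = C (MvPolynomial.C c) := e.commutes c
    simp only [MvPolynomial.monomial_eq, Finsupp.prod_fintype, pow_zero, implies_true, map_sum,
      map_mul, map_prod, map_pow, he_C]
  refine ⟨e, he_sum ▸ isUnit_leadingCoeff_sum (MvPolynomial.support_nonempty.2 hg)
    (fun v hv => (MvPolynomial.mem_support_iff.1 hv).isUnit.map MvPolynomial.C)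
    (fun v _ => he_monic v) ?_⟩
  simp only [he_natDegree]
  exact (sum_mul_pow_injOn _ N).mono fun v hv j =>
    Nat.lt_succ_of_le ((MvPolynomial.monomial_le_degreeOf j hv).trans
      (MvPolynomial.degreeOf_le_totalDegree g j))

end MonicPosition

section WeaklyRegular

open RingTheory.Sequence

lemma isWeaklyRegular_replicate_one {R M : Type*} [CommRing R] [AddCommGroup M] [Module R M]
    (n : ℕ) : IsWeaklyRegular M (List.replicate n (1 : R)) := by
  induction n generalizing M with
  | zero => simp
  | succ n ih => exact (isWeaklyRegular_cons_iff ..).2 ⟨IsSMulRegular.one M, ih⟩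

lemma isWeaklyRegular_map_algEquiv {k R S : Type*} [CommRing k] [CommRing R] [CommRing S]
    [Algebra k R] [Algebra k S] (e : R ≃ₐ[k] S) {rs : List R} (h : IsWeaklyRegular R rs) :
    IsWeaklyRegular S (rs.map e) := by
  refine (AddEquiv.isWeaklyRegular_congr (e := e.toAddEquiv) ?_).1 h
  rw [List.forall₂_map_right_iff, List.forall₂_same]
  exact fun r _ x => map_mul e r x

section Polynomial

open Polynomial

lemma isWeaklyRegular_map_C_append_monic {A : Type*} [CommRing A] {rs : List A}
    (h : IsWeaklyRegular A rs) {g : A[X]} (hg : g.Monic) :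
    IsWeaklyRegular A[X] (rs.map C ++ [g]) := by
  rw [isWeaklyRegular_append_iff, isWeaklyRegular_singleton_iff]
  refine ⟨IsWeaklyRegular.of_flat h, ?_⟩
  have mem_iff (p : A[X]) : p ∈ (Ideal.ofList (rs.map C) • ⊤ : Submodule A[X] A[X]) ↔
      p.map (Ideal.Quotient.mk (Ideal.ofList rs)) = 0 := by
    rw [← Ideal.map_ofList, smul_eq_mul, Ideal.mul_top, Ideal.mem_map_C_iff, Polynomial.ext_iff]
    simp only [coeff_map, coeff_zero, Ideal.Quotient.eq_zero_iff_mem]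
  rw [isSMulRegular_quotient_iff_mem_of_smul_mem]
  intro p hp
  rw [mem_iff, smul_eq_mul, Polynomial.map_mul] at hp
  exact (mem_iff p).2 ((hg.map _).mul_right_eq_zero_iff.1 hp)

end Polynomial

lemma isWeaklyRegular_map_X {σ A : Type*} [CommRing A] {l : List σ} (hl : l.Nodup) :
    IsWeaklyRegular (MvPolynomial σ A) (l.map (MvPolynomial.X : σ → MvPolynomial σ A)) := by
  induction l using List.reverseRecOn with
  | nil => simp
  | append_singleton l a ih =>
    rw [List.nodup_append] at hl
    rw [List.map_append, isWeaklyRegular_append_iff, List.map_singleton,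
      isWeaklyRegular_singleton_iff]
    refine ⟨ih hl.1, ?_⟩
    have hspan : (Ideal.ofList (l.map (MvPolynomial.X : σ → MvPolynomial σ A)) • ⊤ :
        Submodule (MvPolynomial σ A) (MvPolynomial σ A)) =
        Ideal.span (MvPolynomial.X '' {s | s ∈ l}) := by
      rw [smul_eq_mul, Ideal.mul_top, Ideal.ofList]
      congr 1
      ext
      simp
    rw [isSMulRegular_quotient_iff_mem_of_smul_mem, hspan]
    intro p hp
    rw [MvPolynomial.mem_ideal_span_X_image] at hp ⊢
    intro d hd
    obtain ⟨i, hi, hid⟩ := hp (d + Finsupp.single a 1) (by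
      rwa [MvPolynomial.mem_support_iff, smul_eq_mul, mul_comm, MvPolynomial.coeff_mul_X,
        ← MvPolynomial.mem_support_iff])
    have hai : a ≠ i := fun h => hl.2.2 i hi a (by simp) h.symm
    exact ⟨i, hi, by simpa [Finsupp.single_apply, hai] using hid⟩

lemma exists_isWeaklyRegular_of_le_height {K : Type*} [Field K] {m n : ℕ}
    {I : Ideal (MvPolynomial (Fin m) K)} (h : (n : ℕ∞) ≤ I.height) :
    ∃ rs : List (MvPolynomial (Fin m) K), rs.length = n ∧ (∀ r ∈ rs, r ∈ I) ∧
      IsWeaklyRegular (MvPolynomial (Fin m) K) rs := by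
  induction m generalizing n with
  | zero =>
    obtain rfl | hI := eq_or_ne I ⊥
    · exact ⟨[], by simpa [eq_comm] using h⟩
    obtain ⟨g, hgI, hg⟩ := Submodule.exists_mem_ne_zero_of_ne_bot hI
    obtain ⟨b, hb⟩ := ((MvPolynomial.isEmptyRingEquiv K (Fin 0)).toMulEquiv.isField
      (Field.toIsField K)).mul_inv_cancel hg
    have hI_one : 1 ∈ I := hb ▸ I.mul_mem_right b hgI
    exact ⟨List.replicate n 1, by simp, fun r hr => (List.eq_of_mem_replicate hr).symm ▸ hI_one,
      isWeaklyRegular_replicate_one n⟩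
  | succ m ih =>
    obtain _ | n := n
    · exact ⟨[], by simp⟩
    obtain rfl | hI := eq_or_ne I ⊥
    · simp at h
    obtain ⟨g, hgI, hg⟩ := Submodule.exists_mem_ne_zero_of_ne_bot hI
    obtain ⟨e, he⟩ := exists_algEquiv_isUnit_leadingCoeff hg
    have he_monic := Polynomial.monic_of_isUnit_leadingCoeff_inv_smul he
    set g' := he.unit⁻¹ • e g
    have hg'I : g' ∈ I.map e := Submodule.smul_of_tower_mem _ _ (Ideal.mem_map_of_mem e hgI)
    have hheight : (n : ℕ∞) ≤ ((I.map e).comap Polynomial.C).height := by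
      have := height_le_height_comap_C_add_one he_monic hg'I
      rw [show (I.map e).height = I.height from e.toRingEquiv.height_map I] at this
      exact (ENat.add_le_add_iff_right ENat.one_ne_top).1 (by exact_mod_cast h.trans this)
    obtain ⟨rs, hlen, hmem, hreg⟩ := ih hheight
    refine ⟨(rs.map Polynomial.C ++ [g']).map e.symm, by simp [hlen], fun r hr => ?_,
      isWeaklyRegular_map_algEquiv e.symm (isWeaklyRegular_map_C_append_monic hreg he_monic)⟩
    obtain ⟨s, hs, rfl⟩ := List.mem_map.1 hr
    refine (Ideal.symm_apply_mem_of_equiv_iff (f := e.toRingEquiv)).2 (?_ : s ∈ I.map e)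
    obtain hs | hs := List.mem_append.1 hs
    · obtain ⟨t, ht, rfl⟩ := List.mem_map.1 hs
      exact hmem t ht
    · rwa [List.mem_singleton.1 hs]

end WeaklyRegular

section ApproximationComplex

namespace HasProjDimLT

universe u

variable {R V W : Type u} [CommRing R] [AddCommGroup V] [Module R V] [AddCommGroup W] [Module R W]
  {n : ℕ}

lemma map (g : V →ₗ[R] W) (P : Submodule R V)
    (hK : HasProjDimLT R (P ⊓ LinearMap.ker g : Submodule R V) n)
    (hP : HasProjDimLT R P (n + 1)) : HasProjDimLT R (P.map g) (n + 1) := by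
  have hker : (P ⊓ LinearMap.ker g).comap P.subtype = LinearMap.ker (g.submoduleMap P) := by
    ext x
    simp [Subtype.ext_iff]
  refine of_surjective (g.submoduleMap P) (g.submoduleMap_surjective P) ?_ hP
  rw [← hker]
  exact of_linearEquiv (Submodule.comap_equiv_self_of_inj_of_le P.injective_subtype (by simp)).symm
    hK

lemma range_of_ker (g : V →ₗ[R] W) (hK : HasProjDimLT R (LinearMap.ker g) n)
    (hV : HasProjDimLT R V (n + 1)) : HasProjDimLT R (LinearMap.range g) (n + 1) := by
  rw [← LinearMap.ker_rangeRestrict] at hK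
  exact of_surjective _ g.surjective_rangeRestrict hK hV

lemma ker_of_range (g : V →ₗ[R] W) (hV : HasProjDimLT R V n)
    (hg : HasProjDimLT R (LinearMap.range g) (n + 1)) :
    HasProjDimLT R (LinearMap.ker g) n := by
  rw [← LinearMap.ker_rangeRestrict]
  exact ker _ g.surjective_rangeRestrict hV hg

end HasProjDimLT

open MvPolynomial

section Truncation

variable {σ B : Type*} [CommRing B] (t : ℕ)

/-- The truncation of a polynomial to its terms of total degree less than `t`. -/
noncomputable def truncDegree : MvPolynomial σ B →ₗ[B] MvPolynomial σ B :=
  ∑ i ∈ Finset.range t, homogeneousComponent i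

lemma coeff_truncDegree (p : MvPolynomial σ B) (d : σ →₀ ℕ) :
    coeff d (truncDegree t p) = if d.degree < t then coeff d p else 0 := by
  classical
  simp [truncDegree, coeff_sum, coeff_homogeneousComponent]

lemma truncDegree_zero (p : MvPolynomial σ B) : truncDegree 0 p = 0 := by
  simp [truncDegree]

lemma truncDegree_truncDegree (p : MvPolynomial σ B) :
    truncDegree t (truncDegree t p) = truncDegree t p := by
  ext d
  simp only [coeff_truncDegree]
  split_ifs <;> rfl

lemma truncDegree_C_mul (b : B) (p : MvPolynomial σ B) :
    truncDegree t (C b * p) = C b * truncDegree t p := by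
  rw [← smul_eq_C_mul, map_smul, smul_eq_C_mul]

lemma truncDegree_X_mul (j : σ) (p : MvPolynomial σ B) :
    truncDegree (t + 1) (X j * p) = X j * truncDegree t p := by
  classical
  ext d
  by_cases h : j ∈ d.support
  · obtain ⟨e, rfl⟩ : ∃ e, d = Finsupp.single j 1 + e := by
      rw [← le_iff_exists_add, Finsupp.single_le_iff, Nat.one_le_iff_ne_zero]
      exact Finsupp.mem_support_iff.1 h
    simp only [coeff_truncDegree, coeff_X_mul, map_add, Finsupp.degree_single, add_comm 1,
      Nat.add_lt_add_iff_right]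
  · simp only [coeff_truncDegree, coeff_X_mul', if_neg h, ite_self]

lemma truncDegree_eq_self {t : ℕ} {p : MvPolynomial σ B} (h : p.totalDegree < t) :
    truncDegree t p = p := by
  ext d
  rw [coeff_truncDegree, ite_eq_left_iff, not_lt]
  exact fun hd => (coeff_eq_zero_of_totalDegree_lt (h.trans_le hd)).symm

end Truncation

/-- Lifting `z` along `d_y` one degree at a time: the truncation of a lift `w` still lifts `z`, and
`d_f w` is a common cycle of smaller degree in the indeterminates. -/
lemma exists_cycle_koszulD_eq {σ B : Type*} [CommRing B] {n : ℕ}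
    {f y : Fin n → MvPolynomial σ B} (hfC : ∀ j, ∃ b, f j = C b) (hyX : ∀ j, ∃ s, y j = X s)
    {i : ℤ}
    (hf : Function.Exact (koszulD (M := MvPolynomial σ B) f i) (koszulD f (i - 1)))
    (hy : Function.Exact (koszulD (M := MvPolynomial σ B) y (i - 1)) (koszulD y (i - 1 - 1)))
    (z : KoszulIndex n (i - 1 - 1) → MvPolynomial σ B)
    (hfz : koszulD f (i - 1 - 1) z = 0) (hyz : koszulD y (i - 1 - 1) z = 0) :
    ∃ u, koszulD f (i - 1) u = 0 ∧ koszulD y (i - 1) u = z := by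
  obtain ⟨t, ht⟩ : ∃ t, truncDegree t ∘ z = z := by
    obtain ⟨t, ht⟩ := Finite.exists_le fun s => (z s).totalDegree
    exact ⟨t + 1, funext fun s => truncDegree_eq_self (Nat.lt_succ_of_le (ht s))⟩
  induction t generalizing z with
  | zero =>
    obtain rfl : z = 0 := ht.symm.trans (funext fun s => truncDegree_zero (z s))
    exact ⟨0, map_zero _, map_zero _⟩
  | succ t ih =>
    obtain ⟨w, hw⟩ := koszul_exact_iff.1 hy z hyz
    have hyw : koszulD y (i - 1) (truncDegree t ∘ w) = z := by
      rw [← ht, ← hw]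
      exact koszulD_comp_addMonoidHom (g := (truncDegree t).toAddMonoidHom)
        (g' := (truncDegree (t + 1)).toAddMonoidHom)
        (fun j p => by obtain ⟨s, hs⟩ := hyX j; simp [hs, truncDegree_X_mul]) _ w
    have htrunc : truncDegree t ∘ koszulD f (i - 1) (truncDegree t ∘ w) =
        koszulD f (i - 1) (truncDegree t ∘ w) := by
      refine (koszulD_comp_addMonoidHom (f' := f) (g := (truncDegree t).toAddMonoidHom)
        (g' := (truncDegree t).toAddMonoidHom)
        (fun j p => by obtain ⟨b, hb⟩ := hfC j; simp [hb, truncDegree_C_mul]) _ _).symm.trans ?_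
      exact congrArg _ (funext fun s => truncDegree_truncDegree t (w s))
    obtain ⟨u, hfu, hyu⟩ := ih (koszulD f (i - 1) (truncDegree t ∘ w))
      (koszulD_koszulD _ _ _) (by rw [koszulD_koszulD_anticomm, hyw, hfz, neg_zero]) htrunc
    obtain ⟨v, rfl⟩ := koszul_exact_iff.1 hf u hfu
    refine ⟨truncDegree t ∘ w + koszulD y i v, ?_, ?_⟩
    · rw [map_add, koszulD_koszulD_anticomm, hyu, add_neg_cancel]
    · rw [map_add, koszulD_koszulD, hyw, add_zero]

/-- The ideal generated by the linear forms `∑ c j * y j` whose coefficients satisfy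
`∑ c j * f j = 0`. If the `y j` are indeterminates, it defines the symmetric algebra of the ideal
generated by `f`. -/
noncomputable def linearRelationIdeal {S : Type*} [CommRing S] {n : ℕ} (f y : Fin n → S) :
    Ideal S :=
  (LinearMap.ker (Fintype.linearCombination S f)).map (Fintype.linearCombination S y)

section UpperBound

universe u

variable {S : Type u} [CommRing S] {n : ℕ} {f y : Fin n → S}

lemma hasProjDimLT_ker_koszulD
    (hf : ∀ i, 3 ≤ i → Function.Exact (koszulD (M := S) f i) (koszulD f (i - 1))) {j : ℕ} {i : ℤ}
    (hi : 2 ≤ i) (hj : n ≤ i + j) :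
    HasProjDimLT S (LinearMap.ker (koszulD (M := S) f i)) j := by
  obtain ⟨i, rfl⟩ : ∃ k, i = k - 1 := ⟨i + 1, by ring⟩
  have hrange := (hf i (by lia)).linearMap_ker_eq
  induction j generalizing i with
  | zero =>
    have := KoszulIndex.isEmpty_of_lt (n := n) (i := i) (by push_cast at hj; lia)
    rw [hasProjDimLT_zero_iff, Submodule.subsingleton_iff_eq_bot, hrange, LinearMap.range_eq_bot]
    exact Subsingleton.elim _ _
  | succ j ih =>
    have := ih (i + 1) (by lia) (by push_cast at hj ⊢; lia) (hf _ (by lia)).linearMap_ker_eq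
    rw [add_sub_cancel_right] at this
    rw [hrange]
    exact .range_of_ker _ this (.of_projective j)

lemma hasProjDimLT_ker_koszulD_inf_ker_koszulD
    (hf : ∀ i, 3 ≤ i → Function.Exact (koszulD (M := S) f i) (koszulD f (i - 1)))
    (hy : ∀ i, 2 ≤ i → ∀ z : KoszulIndex n (i - 1) → S, koszulD f (i - 1) z = 0 →
      koszulD y (i - 1) z = 0 → ∃ u, koszulD f i u = 0 ∧ koszulD y i u = z)
    {j : ℕ} {i : ℤ} (hi : 1 ≤ i) (hj : n ≤ i + j + 1) :
    HasProjDimLT S (LinearMap.ker (koszulD (M := S) f i) ⊓ LinearMap.ker (koszulD y i) :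
      Submodule S _) j := by
  obtain ⟨i, rfl⟩ : ∃ k, i = k - 1 := ⟨i + 1, by ring⟩
  have hmap (i : ℤ) (hi : 2 ≤ i) : LinearMap.ker (koszulD (M := S) f (i - 1)) ⊓
      LinearMap.ker (koszulD y (i - 1)) = (LinearMap.ker (koszulD f i)).map (koszulD y i) := by
    refine le_antisymm (fun z hz => hy i hi z hz.1 hz.2) ?_
    rintro _ ⟨u, hu, rfl⟩
    refine ⟨?_, koszulD_koszulD y i u⟩
    rw [SetLike.mem_coe, LinearMap.mem_ker] at hu ⊢
    rw [koszulD_koszulD_anticomm, hu, map_zero, neg_zero]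
  induction j generalizing i with
  | zero =>
    have := hasProjDimLT_ker_koszulD hf (j := 0) (i := i) (by lia) (by push_cast at hj ⊢; lia)
    rw [hasProjDimLT_zero_iff, Submodule.subsingleton_iff_eq_bot] at this ⊢
    rw [hmap i (by lia), this, Submodule.map_bot]
  | succ j ih =>
    have := ih (i + 1) (by lia) (by push_cast at hj ⊢; lia)
    rw [add_sub_cancel_right] at this
    rw [hmap i (by lia)]
    exact .map _ _ this (hasProjDimLT_ker_koszulD hf (by lia) (by push_cast at hj ⊢; lia))

lemma comap_ker_linearCombination (f : Fin n → S) :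
    (LinearMap.ker (Fintype.linearCombination S f)).comap
      (LinearEquiv.funCongrLeft S S (KoszulIndex.singleEquiv n)).toLinearMap =
      LinearMap.ker (koszulD (M := S) f 1) := by
  ext w
  have hw (s) : koszulD f 1 w s = ∑ j, w (KoszulIndex.singleEquiv n j) • f j := by
    simp only [koszulD_one_apply, smul_eq_mul, mul_comm]
  have := KoszulIndex.uniqueZero n
  rw [LinearMap.mem_ker, funext_iff]
  simp only [hw, Submodule.mem_comap, LinearMap.mem_ker, Fintype.linearCombination_apply]
  exact ⟨fun h _ => h, fun h => h (default : KoszulIndex n 0)⟩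

lemma hasProjDimLT_quotient_linearRelationIdeal
    (hf : ∀ i, 3 ≤ i → Function.Exact (koszulD (M := S) f i) (koszulD f (i - 1)))
    (hy : ∀ i, 2 ≤ i → ∀ z : KoszulIndex n (i - 1) → S, koszulD f (i - 1) z = 0 →
      koszulD y (i - 1) z = 0 → ∃ u, koszulD f i u = 0 ∧ koszulD y i u = z)
    {t : ℕ} (hn : n ≤ t + 2) (h : HasProjDimLT S (S ⧸ Ideal.span (Set.range f)) (t + 3)) :
    HasProjDimLT S (S ⧸ linearRelationIdeal f y) (t + 2) := by
  have hI : HasProjDimLT S (Ideal.span (Set.range f)) (t + 2) := by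
    have := HasProjDimLT.ker _ (Submodule.mkQ_surjective (Ideal.span (Set.range f)))
      (.of_projective (t + 1)) h
    rwa [Submodule.ker_mkQ] at this
  have hrel : HasProjDimLT S (LinearMap.ker (Fintype.linearCombination S f)) (t + 1) :=
    .ker_of_range _ (.of_projective t) (by
      rw [Fintype.range_linearCombination]
      exact hI)
  have hcycles : HasProjDimLT S (LinearMap.ker (Fintype.linearCombination S f) ⊓
      LinearMap.ker (Fintype.linearCombination S y) : Submodule S _) t := by
    refine .of_linearEquiv (LinearEquiv.ofSubmodule' (LinearEquiv.funCongrLeft S S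
      (KoszulIndex.singleEquiv n)) _) ?_
    rw [Submodule.comap_inf, comap_ker_linearCombination, comap_ker_linearCombination]
    exact hasProjDimLT_ker_koszulD_inf_ker_koszulD hf hy le_rfl (by lia)
  have hJ : HasProjDimLT S (linearRelationIdeal f y) (t + 1) := .map _ _ hcycles hrel
  refine .of_surjective _ (Submodule.mkQ_surjective _) ?_ (.of_projective (t + 1))
  rwa [Submodule.ker_mkQ]

end UpperBound

end ApproximationComplex

section SymmetricAlgebra

universe u

open MvPolynomial RingTheory.Sequence

variable {B : Type u} [CommRing B] {n : ℕ}

/-- The defining ideal, in `B[y_1, …, y_n]`, of the symmetric algebra of the ideal of `B` generated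
by `f`: it consists of the `∑ c_j y_j` with `∑ c_j f_j = 0`. -/
noncomputable def symmetricAlgebraIdeal (f : Fin n → B) : Ideal (MvPolynomial (Fin n) B) :=
  linearRelationIdeal (fun j => C (f j)) X

lemma mem_symmetricAlgebraIdeal {f : Fin n → B} {p : MvPolynomial (Fin n) B} :
    p ∈ symmetricAlgebraIdeal f ↔ ∃ c : Fin n → MvPolynomial (Fin n) B,
      ∑ j, c j * C (f j) = 0 ∧ ∑ j, c j * X j = p := by
  simp [symmetricAlgebraIdeal, linearRelationIdeal, Submodule.mem_map, LinearMap.mem_ker,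
    Fintype.linearCombination_apply]

lemma C_mul_X_sub_mem_symmetricAlgebraIdeal (f : Fin n → B) (i j : Fin n) :
    C (f i) * X j - C (f j) * X i ∈ symmetricAlgebraIdeal f :=
  mem_symmetricAlgebraIdeal.2 ⟨Pi.single j (C (f i)) - Pi.single i (C (f j)), by
    simp [sub_mul, Pi.single_apply, mul_comm (C (f i)) (C (f j))]⟩

lemma hasProjDimLT_quotient_symmetricAlgebraIdeal {f : Fin (n + 1) → B} {rs : List B}
    (hlen : rs.length = n) (hrs : ∀ r ∈ rs, r ∈ Ideal.span (Set.range f))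
    (hreg : IsWeaklyRegular B rs) {t : ℕ} (hn : n ≤ t + 1)
    (h : HasProjDimLT B (B ⧸ Ideal.span (Set.range f)) (t + 3)) :
    HasProjDimLT (MvPolynomial (Fin (n + 1)) B)
      (MvPolynomial (Fin (n + 1)) B ⧸ symmetricAlgebraIdeal f) (t + 2) := by
  set S := MvPolynomial (Fin (n + 1)) B
  have hmap : (Ideal.span (Set.range f)).map (algebraMap B S) =
      Ideal.span (Set.range fun j => (C (f j) : S)) := by
    rw [Ideal.map_span, ← Set.range_comp]
    rfl
  have hf_exact (i : ℤ) (hi : 3 ≤ i) : Function.Exact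
      (koszulD (M := S) (fun j => (C (f j) : S)) i) (koszulD (fun j => (C (f j) : S)) (i - 1)) := by
    refine koszul_exact_of_isWeaklyRegular (rs := rs.map (algebraMap B S)) ?_
      (hreg.of_flat (S := S)) ?_
    · intro a ha
      obtain ⟨b, hb, rfl⟩ := List.mem_map.1 ha
      exact hmap ▸ Ideal.mem_map_of_mem _ (hrs b hb)
    · rw [List.length_map, hlen]
      push_cast
      lia
  have hX_exact (i : ℤ) (hi : 2 ≤ i) : Function.Exact
      (koszulD (M := S) (X : Fin (n + 1) → S) i) (koszulD (X : Fin (n + 1) → S) (i - 1)) := by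
    refine koszul_exact_of_isWeaklyRegular ?_ (isWeaklyRegular_map_X (List.nodup_finRange _)) ?_
    · intro a ha
      obtain ⟨j, -, rfl⟩ := List.mem_map.1 ha
      exact Ideal.subset_span ⟨j, rfl⟩
    · rw [List.length_map, List.length_finRange]
      push_cast
      lia
  refine hasProjDimLT_quotient_linearRelationIdeal hf_exact ?_ (by lia) ?_
  · intro i hi z hfz hXz
    obtain ⟨k, rfl⟩ : ∃ k, i = k - 1 := ⟨i + 1, by ring⟩
    exact exists_cycle_koszulD_eq (fun j => ⟨f j, rfl⟩) (fun j => ⟨j, rfl⟩)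
      (hf_exact k (by lia)) (hX_exact (k - 1) hi) z hfz hXz
  · rw [← hmap]
    exact h.quotient_map S

lemma not_hasProjDimLT_quotient_of_X_sub_mem {J : Ideal (MvPolynomial (Fin (n + 1)) B)}
    (hJ : J ≠ ⊤) (j₀ : Fin (n + 1)) (d : Fin n → B)
    (hd : ∀ i, X (j₀.succAbove i) - C (d i) * X j₀ ∈ J) :
    ¬ HasProjDimLT (MvPolynomial (Fin (n + 1)) B) (MvPolynomial (Fin (n + 1)) B ⧸ J) n := by
  let q : Fin (n + 1) → Polynomial B :=
    j₀.insertNth 0 fun i => Polynomial.C (-d i) * Polynomial.X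
  have hq (i) : shear j₀ q (by simp [q]) (X (j₀.succAbove i)) =
      X (j₀.succAbove i) - C (d i) * X j₀ := by
    simp [shear_X, q, sub_eq_add_neg, algebraMap_eq]
  have hreg := isWeaklyRegular_map_algEquiv (shear j₀ q (by simp [q])) (isWeaklyRegular_map_X
    ((List.nodup_finRange n).map Fin.succAbove_right_injective (f := j₀.succAbove)))
  have := Ideal.Quotient.nontrivial_iff.2 hJ
  have key := not_hasProjDimLT_length_of_smul_eq_zero
    (M := MvPolynomial (Fin (n + 1)) B ⧸ J) hreg ?_
  · simpa using key
  simp only [List.map_map, List.mem_map, List.mem_finRange, true_and, Function.comp_apply,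
    forall_exists_index, forall_apply_eq_imp_iff, hq]
  intro i x
  obtain ⟨x, rfl⟩ := Ideal.Quotient.mk_surjective x
  exact Ideal.Quotient.eq_zero_iff_mem.2 (J.mul_mem_right x (hd i))

/-- After inverting `f j₀`, the symmetric algebra becomes a polynomial ring in one variable, cut out
by the linear forms `y_j - (f_j / f_{j₀}) y_{j₀}`. -/
lemma not_hasProjDimLT_quotient_symmetricAlgebraIdeal {f : Fin (n + 1) → B} {j₀ : Fin (n + 1)}
    (hf : ¬ IsNilpotent (f j₀)) : ¬ HasProjDimLT (MvPolynomial (Fin (n + 1)) B)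
      (MvPolynomial (Fin (n + 1)) B ⧸ symmetricAlgebraIdeal f) n := by
  let L := Localization.Away (f j₀)
  let S := MvPolynomial (Fin (n + 1)) B
  let S' := MvPolynomial (Fin (n + 1)) L
  have : Nontrivial L := by
    rw [← not_subsingleton_iff_nontrivial, IsLocalization.subsingleton_iff (M := .powers (f j₀))]
    exact hf
  let : Algebra S S' := algebraMvPolynomial
  have halg (p : S) : algebraMap S S' p = map (algebraMap B L) p := rfl
  have : Module.Flat S S' := IsLocalization.flat S' ((Submonoid.powers (f j₀)).map (C : B →+* S))
  let J' : Ideal S' := (symmetricAlgebraIdeal f).map (algebraMap S S')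
  have hJ' : J' ≠ ⊤ := by
    refine ne_top_of_le_ne_top (RingHom.ker_ne_top (constantCoeff (R := L) (σ := Fin (n + 1))))
      (Ideal.map_le_iff_le_comap.2 fun p hp => ?_)
    obtain ⟨c, -, rfl⟩ := mem_symmetricAlgebraIdeal.1 hp
    simp [RingHom.mem_ker, halg, S']
  obtain ⟨u, hu⟩ : IsUnit (algebraMap B L (f j₀)) := IsLocalization.Away.algebraMap_isUnit (f j₀)
  have hmem (i : Fin n) : X (j₀.succAbove i) -
      C (↑u⁻¹ * algebraMap B L (f (j₀.succAbove i))) * X j₀ ∈ J' := by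
    have := J'.mul_mem_left (C (↑u⁻¹ : L)) (Ideal.mem_map_of_mem (algebraMap S S')
      (C_mul_X_sub_mem_symmetricAlgebraIdeal f j₀ (j₀.succAbove i)))
    rwa [halg, map_sub, map_mul, map_mul, map_C, map_C, map_X, map_X, ← hu, mul_sub, ← mul_assoc,
      ← mul_assoc, ← C_mul, ← C_mul, u.inv_mul, C_1, one_mul] at this
  intro h
  exact not_hasProjDimLT_quotient_of_X_sub_mem hJ' j₀ _ hmem
    (h.quotient_map S')

lemma exists_not_isNilpotent_of_isWeaklyRegular [Nontrivial B] {f : Fin n → B} {rs : List B}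
    (hne : rs ≠ []) (hrs : ∀ r ∈ rs, r ∈ Ideal.span (Set.range f)) (hreg : IsWeaklyRegular B rs) :
    ∃ j, ¬ IsNilpotent (f j) := by
  by_contra! hf
  obtain ⟨a, rs, rfl⟩ := List.exists_cons_of_ne_nil hne
  obtain ⟨k, hk⟩ : a ∈ nilradical B :=
    Ideal.span_le.2 (by rintro _ ⟨j, rfl⟩; exact hf j) (hrs a List.mem_cons_self)
  have hpow : IsSMulRegular B (a ^ k) := ((isWeaklyRegular_cons_iff ..).1 hreg).1.pow k
  exact not_subsingleton B (IsSMulRegular.zero_iff_subsingleton.1 (hk ▸ hpow))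

end SymmetricAlgebra

section ReesAlgebra

universe u

open MvPolynomial

variable {B : Type u} [CommRing B] {n : ℕ} {I : Ideal B} {f : Fin (n + 1) → B}

lemma coe_reesStructureMap_X (hf : ∀ j, f j ∈ I) (j : Fin (n + 1)) :
    (reesStructureMap I f hf (X j) : Polynomial B) = Polynomial.C (f j) * Polynomial.X := by
  simp [reesStructureMap, fX]

lemma coe_reesStructureMap_C (hf : ∀ j, f j ∈ I) (b : B) :
    (reesStructureMap I f hf (C b) : Polynomial B) = Polynomial.C b := by
  simp [reesStructureMap]

lemma reesStructureMap_surjective (hf : ∀ j, f j ∈ I) (hI : I = Ideal.span (Set.range f)) :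
    Function.Surjective (reesStructureMap I f hf) := by
  let φ := (reesAlgebra I).val.comp (reesStructureMap I f hf)
  have hmonomial : Submodule.map (Polynomial.monomial (R := B) 1) I ≤ φ.range.toSubmodule := by
    rw [hI, Ideal.span, Submodule.map_span, Submodule.span_le]
    rintro _ ⟨_, ⟨j, rfl⟩, rfl⟩
    exact ⟨X j, (coe_reesStructureMap_X hf j).trans (Polynomial.C_mul_X_eq_monomial ..)⟩
  rintro ⟨x, hx⟩
  rw [← adjoin_monomial_eq_reesAlgebra] at hx
  obtain ⟨p, hp⟩ := Algebra.adjoin_le hmonomial hx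
  exact ⟨p, Subtype.ext hp⟩

lemma YLinear.exists_eq_C_add_sum {p : MvPolynomial (Fin (n + 1)) B} (hp : YLinear p) :
    ∃ (b : B) (c : Fin (n + 1) → B), p = C b + ∑ j, C (c j) * X j := by
  have hdeg : p.totalDegree ≤ 1 := by
    refine Finset.sup_le fun w hw => ?_
    rw [Finsupp.sum_fintype _ _ fun _ => rfl]
    exact hp w (mem_support_iff.1 hw)
  obtain h0 | h1 := Nat.le_one_iff_eq_zero_or_eq_one.1 hdeg
  · exact ⟨coeff 0 p, 0, by simpa using totalDegree_eq_zero_iff_eq_C.1 h0⟩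
  have hmem := homogeneousComponent_mem 1 p
  rw [homogeneousSubmodule_one_eq_span_X, Submodule.mem_span_range_iff_exists_fun] at hmem
  obtain ⟨c, hc⟩ := hmem
  refine ⟨coeff 0 p, c, ?_⟩
  conv_lhs => rw [← sum_homogeneousComponent p, h1]
  simp only [Finset.sum_range_succ, Finset.sum_range_zero, zero_add, homogeneousComponent_zero,
    ← hc, smul_eq_C_mul]

lemma ker_reesStructureMap (hf : ∀ j, f j ∈ I)
    (hlt : IsLinearTypePres (reesStructureMap I f hf)) :
    RingHom.ker (reesStructureMap I f hf).toRingHom = symmetricAlgebraIdeal f := by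
  let φ := (reesAlgebra I).val.comp (reesStructureMap I f hf)
  have hφX (j) : φ (X j) = Polynomial.C (f j) * Polynomial.X := coe_reesStructureMap_X hf j
  have hφC (b) : φ (C b) = Polynomial.C b := coe_reesStructureMap_C hf b
  have mem_ker (p) : p ∈ RingHom.ker (reesStructureMap I f hf).toRingHom ↔ φ p = 0 :=
    RingHom.mem_ker.trans (Subtype.ext_iff)
  refine le_antisymm ?_ fun p hp => ?_
  · obtain ⟨G, hG, hker⟩ := hlt
    rw [hker, Ideal.span_le]
    intro p hp
    have hφp : φ p = 0 := (mem_ker p).1 (hker ▸ Ideal.subset_span hp)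
    obtain ⟨b, c, rfl⟩ := (hG p hp).exists_eq_C_add_sum
    simp only [map_add, map_sum, map_mul, hφX, hφC] at hφp
    have hb : b = 0 := by simpa using congrArg (Polynomial.coeff · 0) hφp
    have hc : ∑ j, c j * f j = 0 := by
      simpa [Polynomial.coeff_C] using congrArg (Polynomial.coeff · 1) hφp
    refine mem_symmetricAlgebraIdeal.2 ⟨fun j => C (c j), ?_, by simp [hb]⟩
    rw [← map_zero C, ← hc, map_sum]
    simp
  · obtain ⟨c, hc, rfl⟩ := mem_symmetricAlgebraIdeal.1 hp
    have hφc := congrArg φ hc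
    rw [mem_ker]
    simp only [map_sum, map_mul, map_zero, hφX, hφC] at hφc ⊢
    rw [← zero_mul Polynomial.X, ← hφc, Finset.sum_mul]
    simp only [mul_assoc]

lemma hasProjDimLT_reesAlgebra_iff (hf : ∀ j, f j ∈ I) (hI : I = Ideal.span (Set.range f))
    (hlt : IsLinearTypePres (reesStructureMap I f hf)) {t : ℕ} :
    letI := reesModule I f hf
    HasProjDimLT (MvPolynomial (Fin (n + 1)) B) (reesAlgebra I) t ↔
      HasProjDimLT (MvPolynomial (Fin (n + 1)) B)
        (MvPolynomial (Fin (n + 1)) B ⧸ symmetricAlgebraIdeal f) t := by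
  let := reesModule I f hf
  let φ : MvPolynomial (Fin (n + 1)) B →ₗ[MvPolynomial (Fin (n + 1)) B] reesAlgebra I :=
    { reesStructureMap I f hf with map_smul' := map_mul (reesStructureMap I f hf) }
  let e := (Submodule.quotEquivOfEq _ _ (ker_reesStructureMap hf hlt).symm).trans
    (φ.quotKerEquivOfSurjective (reesStructureMap_surjective hf hI))
  exact ⟨.of_linearEquiv e.symm, .of_linearEquiv e⟩

/-- The coefficient of `X` splits the inclusion `I → R(I)`, `g ↦ g X`. -/
lemma hasProjDimLT_quotient_of_reesAlgebra (hf : ∀ j, f j ∈ I) {t : ℕ}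
    (h : letI := reesModule I f hf
      HasProjDimLT (MvPolynomial (Fin (n + 1)) B) (reesAlgebra I) t) :
    HasProjDimLT B (B ⧸ I) (t + 1) := by
  let := reesModule I f hf
  have : IsScalarTower B (MvPolynomial (Fin (n + 1)) B) (reesAlgebra I) :=
    .of_algebraMap_smul fun b x => by
      change reesStructureMap I f hf (algebraMap _ _ b) * x = _
      rw [AlgHom.commutes, Algebra.smul_def]
  let ι : I →ₗ[B] reesAlgebra I :=
    { toFun := fun g => fX I g g.2
      map_add' := fun _ _ => Subtype.ext (by simp [fX, add_mul])
      map_smul' := fun _ _ => Subtype.ext (by simp [fX, Polynomial.smul_eq_C_mul, mul_assoc]) }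
  let ρ : reesAlgebra I →ₗ[B] I :=
    (Polynomial.lcoeff B 1 ∘ₗ (reesAlgebra I).val.toLinearMap).codRestrict I fun x => by
      simpa using (mem_reesAlgebra_iff I x.1).1 x.2 1
  have hρι : ρ ∘ₗ ι = LinearMap.id := by
    ext g
    simp [ρ, ι, fX]
  refine .of_surjective _ I.mkQ_surjective ?_ (.of_projective t)
  rw [Submodule.ker_mkQ]
  exact .of_retract ι ρ hρι h.restrictScalars

end ReesAlgebra

theorem projDim_reesAlgebra_general {B : Type} [CommRing B] [Nontrivial B] {n : ℕ} (hn : n ≠ 0)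
    {I : Ideal B} {f : Fin (n + 1) → B} (hf : ∀ j, f j ∈ I) (hI : I = Ideal.span (Set.range f))
    {rs : List B} (hlen : rs.length = n) (hrs : ∀ r ∈ rs, r ∈ I)
    (hreg : RingTheory.Sequence.IsWeaklyRegular B rs)
    (hlt : IsLinearTypePres (reesStructureMap I f hf)) :
    (projDim B (B ⧸ I) = (n : ℕ∞) →
      @projDim (MvPolynomial (Fin (n + 1)) B) _ (reesAlgebra I) _ (reesModule I f hf) = (n : ℕ∞)) ∧
    (∀ k : ℕ, n < k → projDim B (B ⧸ I) = (k : ℕ∞) →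
      @projDim (MvPolynomial (Fin (n + 1)) B) _ (reesAlgebra I) _ (reesModule I f hf) =
        (k : ℕ∞) - 1) := by
  let := reesModule I f hf
  have upper {t : ℕ} (ht : n ≤ t + 1) (h : projDim B (B ⧸ I) ≤ (t + 2 : ℕ)) :
      HasProjDimLT (MvPolynomial (Fin (n + 1)) B) (reesAlgebra I) (t + 2) := by
    have h := (projDim_le_iff_hasProjDimLT (by lia)).1 h
    rw [hasProjDimLT_reesAlgebra_iff hf hI hlt]
    subst hI
    exact hasProjDimLT_quotient_symmetricAlgebraIdeal hlen hrs hreg ht h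
  refine ⟨fun hpd => ?_, fun k hk hpd => ?_⟩
  · obtain ⟨t, rfl⟩ := Nat.exists_eq_succ_of_ne_zero hn
    refine projDim_eq_of_hasProjDimLT hn (upper le_rfl (hpd.trans_le (by simp))) ?_
    obtain ⟨j, hj⟩ := exists_not_isNilpotent_of_isWeaklyRegular (f := f)
      (List.ne_nil_of_length_eq_add_one hlen) (hI ▸ hrs) hreg
    rw [hasProjDimLT_reesAlgebra_iff hf hI hlt]
    exact not_hasProjDimLT_quotient_symmetricAlgebraIdeal hj
  · obtain ⟨t, rfl⟩ : ∃ t, k = t + 2 := ⟨k - 2, by lia⟩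
    rw [show ((t + 2 : ℕ) : ℕ∞) - 1 = (t + 1 : ℕ) from (ENat.natCast_sub _ 1).symm]
    refine projDim_eq_of_hasProjDimLT (by lia) (upper (by lia) hpd.le) fun h => ?_
    exact not_hasProjDimLT_of_lt_projDim (by lia) (by rw [hpd]; exact_mod_cast Nat.lt_succ_self _)
      (hasProjDimLT_quotient_of_reesAlgebra hf h)

lemma minGens_bot {A : Type*} [CommRing A] : minGens (⊥ : Ideal A) = 0 :=
  Nat.le_zero.1 (Nat.sInf_le ⟨Fin.elim0, by simp⟩)

/-- Remark 3.4: let `I` be a graded ideal of linear type in a standard graded polynomial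
ring `B` over a field of characteristic zero, with `μ(I) = ht(I) + 1 = n + 1` and
`grade(I) = n`.  Then `pd_S R(I) = n` if `pd_B (B/I) = n`, and `pd_S R(I) = k - 1` if
`pd_B (B/I) = k > n`. -/
theorem projDim_reesAlgebra (K : Type) [Field K] [CharZero K] (m n : ℕ)
    (I : Ideal (MvPolynomial (Fin m) K))
    (f : Fin (n + 1) → MvPolynomial (Fin m) K) (hf : ∀ j, f j ∈ I)
    (hI : I = Ideal.span (Set.range f))
    (hhomog : ∀ j, ∃ dj : ℕ, f j ∈ MvPolynomial.homogeneousSubmodule (Fin m) K dj)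
    (hmu : minGens I = n + 1) (hht : idealHeight I = (n : ℕ∞))
    (hlt : IsLinearTypePres (reesStructureMap I f hf)) :
    (projDim (MvPolynomial (Fin m) K) (MvPolynomial (Fin m) K ⧸ I) = (n : ℕ∞) →
      @projDim (MvPolynomial (Fin (n + 1)) (MvPolynomial (Fin m) K)) _
        (reesAlgebra I) _ (reesModule I f hf) = (n : ℕ∞)) ∧
    (∀ k : ℕ, n < k →
      projDim (MvPolynomial (Fin m) K) (MvPolynomial (Fin m) K ⧸ I) = (k : ℕ∞) →
      @projDim (MvPolynomial (Fin (n + 1)) (MvPolynomial (Fin m) K)) _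
        (reesAlgebra I) _ (reesModule I f hf) = (k : ℕ∞) - 1) := by
  rw [idealHeight_eq_height] at hht
  have hn : n ≠ 0 := by
    rintro rfl
    rw [Ideal.height_eq_zero_iff_eq_bot.1 hht, minGens_bot] at hmu
    exact absurd hmu (by simp)
  obtain ⟨rs, hlen, hrs, hreg⟩ := exists_isWeaklyRegular_of_le_height hht.ge
  exact projDim_reesAlgebra_general hn hf hI hlen hrs hreg hlt
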